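/- arXiv:2209.08269 — 2 statements merged into one kernel-verified Lean document; each statement's English description precedes it below -/
import Mathlib

section
/- If a finite simple graph G is B₀, then there exists a spanning subgraph H of G containing every diamond diagonal of G such that every cycle of odd length in G contains an odd number of edges belonging to H. -/
/-!
Every axis-parallel segment lies on a horizontal or on a vertical line. Take `H` to be the edges of
`G` joining two segments of the same direction (single points count as horizontal). The other edges
form a cut, so every closed walk uses an even number of them (`even_countP_add_length_iff`), and an
odd cycle has an odd number of edges in `H`. If a horizontal and a vertical segment meet, then any
segment meeting both contains their common point (`mem_of_meets_both`), so any two common neighbours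
are adjacent: a diamond diagonal never belongs to the cut.
-/

/-- A nonempty axis-parallel closed segment in `ℝ²`: the convex hull of two points
agreeing in the x-coordinate or agreeing in the y-coordinate (a point is allowed). -/
def IsAxisParallelSegment (s : Set (ℝ × ℝ)) : Prop :=
  ∃ p q : ℝ × ℝ, (p.1 = q.1 ∨ p.2 = q.2) ∧ s = segment ℝ p q

/-- A graph is B₀ if its vertices can be assigned axis-parallel segments in the plane
such that two distinct vertices are adjacent iff their segments intersect. -/
def IsB0 {V : Type*} (G : SimpleGraph V) : Prop :=
  ∃ s : V → Set (ℝ × ℝ),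
    (∀ v, IsAxisParallelSegment (s v)) ∧
    ∀ u v : V, u ≠ v → (G.Adj u v ↔ (s u ∩ s v).Nonempty)

/-- An edge \`uv\` of \`G\` is a diamond diagonal: there are two distinct nonadjacent vertices
\`x\` and \`y\` each adjacent to both \`u\` and \`v\`. -/
def DiamondDiagonal {V : Type*} (G : SimpleGraph V) (u v : V) : Prop :=
  G.Adj u v ∧ ∃ x y : V, x ≠ y ∧ ¬ G.Adj x y ∧
    G.Adj u x ∧ G.Adj v x ∧ G.Adj u y ∧ G.Adj v y

/-- A graph is an interval graph if its vertices can be assigned nonempty closed intervals of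
\`ℝ\` so that two distinct vertices are adjacent iff their intervals intersect. -/
def IsIntervalGraph {W : Type*} (H : SimpleGraph W) : Prop :=
  ∃ f : W → Set ℝ, (∀ w, ∃ a b : ℝ, a ≤ b ∧ f w = Set.Icc a b) ∧
    ∀ u v : W, u ≠ v → (H.Adj u v ↔ (f u ∩ f v).Nonempty)
open scoped Classical

/-- The set lies on a horizontal line. -/
def OnHorizontalLine (s : Set (ℝ × ℝ)) : Prop := ∃ c, ∀ z ∈ s, z.2 = c

/-- The set lies on a vertical line. -/
def OnVerticalLine (s : Set (ℝ × ℝ)) : Prop := ∃ c, ∀ z ∈ s, z.1 = c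

lemma IsAxisParallelSegment.horizontal_or_vertical {s : Set (ℝ × ℝ)}
    (h : IsAxisParallelSegment s) : OnHorizontalLine s ∨ OnVerticalLine s := by
  obtain ⟨p, q, hpq, rfl⟩ := h
  rcases hpq with h | h
  · refine Or.inr ⟨p.1, ?_⟩
    rintro z ⟨a, b, -, -, hab, rfl⟩
    simp only [Prod.fst_add, Prod.smul_fst, ← h, ← add_smul, hab, one_smul]
  · refine Or.inl ⟨p.2, ?_⟩
    rintro z ⟨a, b, -, -, hab, rfl⟩
    simp only [Prod.snd_add, Prod.smul_snd, ← h, ← add_smul, hab, one_smul]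

lemma mem_of_meets_both {s t x : Set (ℝ × ℝ)} {p : ℝ × ℝ} (hs : OnHorizontalLine s)
    (ht : OnVerticalLine t) (hps : p ∈ s) (hpt : p ∈ t) (hx : IsAxisParallelSegment x)
    (hsx : (s ∩ x).Nonempty) (htx : (t ∩ x).Nonempty) : p ∈ x := by
  obtain ⟨c, hc⟩ := hs
  obtain ⟨d, hd⟩ := ht
  obtain ⟨z, hzs, hzx⟩ := hsx
  obtain ⟨w, hwt, hwx⟩ := htx
  -- If `x` is horizontal it meets `t` at `p`; if vertical, it meets `s` at `p`.
  rcases hx.horizontal_or_vertical with ⟨e, he⟩ | ⟨e, he⟩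
  · have : p = w := Prod.ext ((hd p hpt).trans (hd w hwt).symm)
      (by rw [hc p hps, ← hc z hzs, he z hzx, he w hwx])
    exact this ▸ hwx
  · have : p = z := Prod.ext (by rw [hd p hpt, ← hd w hwt, he w hwx, he z hzx])
      ((hc p hps).trans (hc z hzs).symm)
    exact this ▸ hzx

/-- The edges of `G` whose two ends agree about the predicate `P`. -/
def SimpleGraph.sameSide {V : Type*} (G : SimpleGraph V) (P : V → Prop) : SimpleGraph V where
  Adj u v := G.Adj u v ∧ (P u ↔ P v)
  symm := ⟨fun _ _ h => ⟨h.1.symm, h.2.symm⟩⟩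
  loopless := ⟨fun _ h => h.1.ne rfl⟩

/-- A walk changes side an even number of times iff its ends are on the same side. -/
lemma even_countP_add_length_iff {V : Type*} {G : SimpleGraph V} (P : V → Prop) {a b : V}
    (w : G.Walk a b) :
    Even (w.edges.countP (fun e => decide (e ∈ (G.sameSide P).edgeSet)) + w.length) ↔
      (P a ↔ P b) := by
  induction w with
  | nil => simp
  | @cons u v x huv p ih =>
    have hH : s(u, v) ∈ (G.sameSide P).edgeSet ↔ (P u ↔ P v) := by
      simp [SimpleGraph.sameSide, huv]
    rw [SimpleGraph.Walk.edges_cons, List.countP_cons, SimpleGraph.Walk.length_cons]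
    simp only [decide_eq_true_eq, hH]
    by_cases h : P u ↔ P v
    · rw [if_pos h, h, ← ih]
      grind
    · rw [if_neg h, show (P u ↔ P x) ↔ ¬ (P v ↔ P x) by tauto, ← ih]
      grind

/-- If `G` is B₀ then it has a spanning subgraph `H` containing all diamond diagonals of
`G` such that every odd cycle of `G` contains an odd number of edges of `H`. -/
theorem exists_spanning_subgraph_odd_cycles_of_isB0 {V : Type*} [Fintype V]
    (G : SimpleGraph V) (h : IsB0 G) :
    ∃ H : SimpleGraph V, H ≤ G ∧
      (∀ u v : V, DiamondDiagonal G u v → H.Adj u v) ∧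
      ∀ (a : V) (c : G.Walk a a), c.IsCycle → Odd c.length →
        Odd (c.edges.countP (fun e => decide (e ∈ H.edgeSet))) := by
  obtain ⟨s, hs, hadj⟩ := h
  have inter : ∀ {u v : V}, G.Adj u v → (s u ∩ s v).Nonempty :=
    fun h => (hadj _ _ h.ne).1 h
  have key : ∀ u v : V, DiamondDiagonal G u v → OnHorizontalLine (s u) →
      OnHorizontalLine (s v) := by
    rintro u v ⟨huv, x, y, hxy, hnxy, hux, hvx, huy, hvy⟩ hu
    by_contra hv
    have hv' := (hs v).horizontal_or_vertical.resolve_left hv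
    obtain ⟨p, hpu, hpv⟩ := inter huv
    exact hnxy ((hadj x y hxy).2
      ⟨p, mem_of_meets_both hu hv' hpu hpv (hs x) (inter hux) (inter hvx),
        mem_of_meets_both hu hv' hpu hpv (hs y) (inter huy) (inter hvy)⟩)
  refine ⟨G.sameSide fun v => OnHorizontalLine (s v), fun _ _ h => h.1, ?_, ?_⟩
  · intro u v hd
    refine ⟨hd.1, key u v hd, key v u ?_⟩
    obtain ⟨huv, x, y, hxy, hnxy, hux, hvx, huy, hvy⟩ := hd
    exact ⟨huv.symm, x, y, hxy, hnxy, hvx, hux, hvy, huy⟩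
  · intro a c _ hodd
    have := (even_countP_add_length_iff (fun v => OnHorizontalLine (s v)) c).2 Iff.rfl
    exact (Nat.even_add'.1 this).2 hodd
end

section
/- If a finite simple graph G is B₀, then for every vertex v of G, the subgraph of G induced on the closed neighborhood N[v] (the vertex v together with all its neighbors) is an interval graph. -/
theorem IsAxisParallelSegment.exists_eq_prod {s : Set (ℝ × ℝ)} (hs : IsAxisParallelSegment s) :
    ∃ p q : ℝ × ℝ, (p.1 = q.1 ∨ p.2 = q.2) ∧ s = Set.uIcc p.1 q.1 ×ˢ Set.uIcc p.2 q.2 := by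
  obtain ⟨⟨a, b⟩, ⟨c, d⟩, h, rfl⟩ := hs
  refine ⟨(a, b), (c, d), h, ?_⟩
  rcases h with h | h <;> dsimp only at h ⊢ <;> subst h
  · rw [← Prod.image_mk_segment_right, segment_eq_uIcc, Set.uIcc_self, Set.singleton_prod]
  · rw [← Prod.image_mk_segment_left, segment_eq_uIcc, Set.uIcc_self, Set.prod_singleton]

/-- If `G` is B₀, then for every vertex `v` the subgraph induced on the closed neighborhood
`N[v]` is an interval graph. -/
theorem closedNeighborhood_interval_of_isB0 {V : Type*} [Fintype V]
    (G : SimpleGraph V) (h : IsB0 G) (v : V) :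
    IsIntervalGraph (G.induce (insert v (G.neighborSet v))) := by
  obtain ⟨s, hs, hadj⟩ := h
  choose p q hpq hbox using fun u => (hs u).exists_eq_prod
  have hmeet : ∀ u w : V, u ≠ w → (G.Adj u w ↔
      (Set.uIcc (p u).1 (q u).1 ∩ Set.uIcc (p w).1 (q w).1).Nonempty ∧
      (Set.uIcc (p u).2 (q u).2 ∩ Set.uIcc (p w).2 (q w).2).Nonempty) := by
    intro u w huw
    rw [hadj u w huw, hbox u, hbox w, Set.prod_inter_prod, Set.prod_nonempty_iff]
  rcases hpq v with hv | hv
  · have hc : ∀ u ∈ insert v (G.neighborSet v), (p v).1 ∈ Set.uIcc (p u).1 (q u).1 := by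
      rintro u (rfl | hu)
      · exact Set.left_mem_uIcc
      · have h := ((hmeet v u (G.ne_of_adj hu)).1 hu).1
        rwa [← hv, Set.uIcc_self, Set.singleton_inter_nonempty] at h
    refine ⟨fun u => Set.uIcc (p u).2 (q u).2, fun u => ⟨_, _, inf_le_sup, rfl⟩, fun u w huw => ?_⟩
    rw [SimpleGraph.comap_adj]
    exact (hmeet u w (Subtype.coe_injective.ne huw)).trans
      (and_iff_right ⟨_, hc u u.2, hc w w.2⟩)
  · have hc : ∀ u ∈ insert v (G.neighborSet v), (p v).2 ∈ Set.uIcc (p u).2 (q u).2 := by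
      rintro u (rfl | hu)
      · exact Set.left_mem_uIcc
      · have h := ((hmeet v u (G.ne_of_adj hu)).1 hu).2
        rwa [← hv, Set.uIcc_self, Set.singleton_inter_nonempty] at h
    refine ⟨fun u => Set.uIcc (p u).1 (q u).1, fun u => ⟨_, _, inf_le_sup, rfl⟩, fun u w huw => ?_⟩
    rw [SimpleGraph.comap_adj]
    exact (hmeet u w (Subtype.coe_injective.ne huw)).trans
      (and_iff_left ⟨_, hc u u.2, hc w w.2⟩)
end
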